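/- Let E be a product system and u, v units of E. Then there exists a unique complex number c(u,v) such that ⟨u(t), v(t)⟩ = e^{t·c(u,v)} for all t > 0. -/

import Mathlib

local notation "⟪" x ", " y "⟫" => @inner ℂ _ _ x y

/-!
For units `u`, `v` the function `f t = ⟪u t, v t⟫` is multiplicative on `(0, ∞)`, and the quotients
`f s / f t` depend only on `s - t`, so they extend `f` to an additive character `ψ` of `ℝ`. The
additive function `log ‖ψ‖` is measurable, hence continuous, so `ψ` is locally integrable.
Integrating `ψ (x + t) = ψ x * ψ t` over `t ∈ [0, a]`, with `a` such that `∫ t in 0..a, ψ t` is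
invertible, expresses `ψ x` through a primitive of `ψ`. This makes `ψ` continuous and then, by the
same formula, differentiable; so `ψ' = ψ * c` with `c = ψ' 0`, which forces `ψ t = exp (t • c)`.
-/

open Filter MeasureTheory NormedSpace Topology

section Differentiable

lemma hasDerivAt_addChar_of_hasDerivAt_zero {𝕜 A : Type*} [NontriviallyNormedField 𝕜]
    [NormedRing A] [NormedAlgebra 𝕜 A] {ψ : AddChar 𝕜 A} {c : A} (hψ : HasDerivAt ψ c 0) (x : 𝕜) :
    HasDerivAt ψ (ψ x * c) x := by
  have hψx : HasDerivAt (fun y ↦ ψ (y - x)) c x :=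
    HasDerivAt.comp_sub_const x x (by rwa [sub_self])
  refine (hψx.const_mul (ψ x)).congr_of_eventuallyEq (.of_forall fun y ↦ ?_)
  beta_reduce
  rw [← ψ.map_add_eq_mul, add_sub_cancel]

variable {𝕜 A : Type*} [RCLike 𝕜] [NormedRing A] [NormedAlgebra 𝕜 A] [CompleteSpace A]

lemma addChar_eq_exp_smul_of_hasDerivAt_zero {ψ : AddChar 𝕜 A} {c : A} (hψ : HasDerivAt ψ c 0)
    (t : 𝕜) : ψ t = exp (t • c) := by
  have hderiv (x : 𝕜) : HasDerivAt (fun y ↦ ψ (-y) * exp (y • c)) 0 x := by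
    have hneg : HasDerivAt (fun y ↦ ψ (-y)) ((-1 : 𝕜) • (ψ (-x) * c)) x :=
      (hasDerivAt_addChar_of_hasDerivAt_zero hψ (-x)).scomp x (hasDerivAt_neg x)
    refine (hneg.mul (hasDerivAt_exp_smul_const' c x)).congr_deriv ?_
    rw [neg_one_smul, neg_mul, mul_assoc, neg_add_cancel]
  have hone : ψ (-t) * exp (t • c) = 1 := by
    have hconst := is_const_of_deriv_eq_zero (fun x ↦ (hderiv x).differentiableAt)
      (fun x ↦ (hderiv x).deriv) t 0
    simpa only [neg_zero, zero_smul, exp_zero, ψ.map_zero_eq_one, mul_one] using hconst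
  calc
    ψ t = ψ t * (ψ (-t) * exp (t • c)) := by rw [hone, mul_one]
    _ = exp (t • c) := by
      rw [← mul_assoc, ← ψ.map_add_eq_mul, add_neg_cancel, ψ.map_zero_eq_one, one_mul]

lemma eq_of_exp_smul_eventuallyEq {c d : A} {t₀ : 𝕜}
    (h : (fun t : 𝕜 ↦ exp (t • c)) =ᶠ[𝓝 t₀] fun t ↦ exp (t • d)) : c = d := by
  let : NormedAlgebra ℚ A := NormedAlgebra.restrictScalars ℚ 𝕜 A
  have hderiv : exp (t₀ • c) * c = exp (t₀ • d) * d :=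
    (hasDerivAt_exp_smul_const c t₀).unique
      ((hasDerivAt_exp_smul_const d t₀).congr_of_eventuallyEq h)
  rw [h.eq_of_nhds] at hderiv
  exact (isUnit_exp (t₀ • d)).mul_left_cancel hderiv

end Differentiable

section LocallyIntegrable

lemma intervalIntegrable_of_locallyIntegrable {E : Type*} [NormedAddCommGroup E] {f : ℝ → E}
    {μ : Measure ℝ} (hf : LocallyIntegrable f μ) (a b : ℝ) : IntervalIntegrable f μ a b :=
  (hf.integrableOn_isCompact isCompact_uIcc).intervalIntegrable

variable {A : Type*} [NormedRing A] [NormedAlgebra ℝ A] [CompleteSpace A] {ψ : AddChar ℝ A}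

lemma primitive_addChar_sub (hψ : LocallyIntegrable ψ) (x y : ℝ) :
    (∫ t in (0 : ℝ)..y, ψ t) - ∫ t in (0 : ℝ)..x, ψ t = ψ x * ∫ t in (0 : ℝ)..(y - x), ψ t := by
  have hint := intervalIntegrable_of_locallyIntegrable hψ
  calc
    (∫ t in (0 : ℝ)..y, ψ t) - ∫ t in (0 : ℝ)..x, ψ t = ∫ t in x..y, ψ t :=
      intervalIntegral.integral_interval_sub_left (hint 0 y) (hint 0 x)
    _ = ∫ t in (0 : ℝ)..(y - x), ψ (x + t) := by
      rw [intervalIntegral.integral_comp_add_left (fun t ↦ ψ t), add_zero, add_sub_cancel]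
    _ = ∫ t in (0 : ℝ)..(y - x), ψ x * ψ t := by simp only [ψ.map_add_eq_mul]
    _ = ψ x * ∫ t in (0 : ℝ)..(y - x), ψ t :=
      (ContinuousLinearMap.mul ℝ A (ψ x)).intervalIntegral_comp_comm (hint 0 (y - x))

lemma exists_isUnit_primitive_addChar (hψ : LocallyIntegrable ψ) :
    ∃ a, IsUnit (∫ t in (0 : ℝ)..a, ψ t) := by
  obtain ⟨x, hx⟩ := (LocallyIntegrable.ae_hasDerivAt_integral hψ).exists
  -- The difference quotients of the primitive at `x` tend to the unit `ψ x`, and units are open.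
  have hslope : ∀ᶠ y in 𝓝[≠] x, IsUnit (slope (fun z ↦ ∫ t in (0 : ℝ)..z, ψ t) x y) :=
    hasDerivAt_iff_tendsto_slope.1 (hx 0) (Units.isOpen.mem_nhds (ψ.val_isUnit x))
  obtain ⟨y, hy, hyx⟩ := (hslope.and self_mem_nhdsWithin).exists
  rw [slope_def_module, primitive_addChar_sub hψ,
    show (y - x)⁻¹ = (Units.mk0 (y - x) (sub_ne_zero.2 hyx))⁻¹ from rfl, ← Units.smul_def,
    isUnit_smul_iff, (ψ.val_isUnit x).mul_left_iff] at hy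
  exact ⟨y - x, hy⟩

lemma addChar_eq_primitive_sub_mul_inverse (hψ : LocallyIntegrable ψ) {a : ℝ}
    (ha : IsUnit (∫ t in (0 : ℝ)..a, ψ t)) (x : ℝ) :
    ψ x = ((∫ t in (0 : ℝ)..(x + a), ψ t) - ∫ t in (0 : ℝ)..x, ψ t) *
      Ring.inverse (∫ t in (0 : ℝ)..a, ψ t) := by
  rw [primitive_addChar_sub hψ, add_sub_cancel_left, mul_assoc, Ring.mul_inverse_cancel _ ha,
    mul_one]

lemma continuous_addChar_of_locallyIntegrable (hψ : LocallyIntegrable ψ) : Continuous ψ := by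
  obtain ⟨a, ha⟩ := exists_isUnit_primitive_addChar hψ
  have hprim : Continuous fun x ↦ ∫ t in (0 : ℝ)..x, ψ t :=
    intervalIntegral.continuous_primitive (intervalIntegrable_of_locallyIntegrable hψ) 0
  rw [funext (addChar_eq_primitive_sub_mul_inverse hψ ha)]
  fun_prop

lemma differentiable_addChar_of_locallyIntegrable (hψ : LocallyIntegrable ψ) :
    Differentiable ℝ ψ := by
  obtain ⟨a, ha⟩ := exists_isUnit_primitive_addChar hψ
  have hprim : Differentiable ℝ fun x ↦ ∫ t in (0 : ℝ)..x, ψ t := fun x ↦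
    ((continuous_addChar_of_locallyIntegrable hψ).integral_hasStrictDerivAt 0
      x).hasDerivAt.differentiableAt
  rw [funext (addChar_eq_primitive_sub_mul_inverse hψ ha)]
  fun_prop

theorem exists_addChar_eq_exp_smul_of_locallyIntegrable (hψ : LocallyIntegrable ψ) :
    ∃ c : A, ∀ t : ℝ, ψ t = exp (t • c) :=
  ⟨deriv ψ 0, addChar_eq_exp_smul_of_hasDerivAt_zero
    (differentiable_addChar_of_locallyIntegrable hψ 0).hasDerivAt⟩

end LocallyIntegrable

section Measurable

variable {G 𝕜 : Type*} [SeminormedAddCommGroup G] [MeasurableSpace G] [BorelSpace G]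
  [LocallyCompactSpace G] [NormedDivisionRing 𝕜] [MeasurableSpace 𝕜] [OpensMeasurableSpace 𝕜]
  {ψ : AddChar G 𝕜}

lemma continuous_norm_addChar_of_measurable (hψ : Measurable ψ) : Continuous fun x ↦ ‖ψ x‖ := by
  have hpos (x : G) : 0 < ‖ψ x‖ := norm_pos_iff.2 (ψ.val_isUnit x).ne_zero
  let logNorm : G →+ ℝ := AddMonoidHom.mk' (fun x ↦ Real.log ‖ψ x‖) fun x y ↦ by
    rw [ψ.map_add_eq_mul, norm_mul, Real.log_mul (hpos x).ne' (hpos y).ne']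
  have hlog : Continuous logNorm :=
    Measure.AddMonoidHom.continuous_of_measurable logNorm (Real.measurable_log.comp hψ.norm)
  exact (Real.continuous_exp.comp hlog).congr fun x ↦ Real.exp_log (hpos x)

lemma locallyIntegrable_addChar_of_measurable [SecondCountableTopology 𝕜] {μ : Measure G}
    [IsLocallyFiniteMeasure μ] (hψ : Measurable ψ) : LocallyIntegrable ψ μ :=
  (continuous_norm_addChar_of_measurable hψ).locallyIntegrable.mono hψ.aestronglyMeasurable
    (.of_forall fun _ ↦ (norm_norm _).ge)

end Measurable

section Extension

variable {α M : Type*} [AddCommGroup α] [LinearOrder α] [CommGroupWithZero M] {f : α → M}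

lemma div_eq_div_of_sub_eq_sub (hadd : ∀ s t, 0 < s → 0 < t → f (s + t) = f s * f t)
    (hne : ∀ t, 0 < t → f t ≠ 0) {a b c d : α} (ha : 0 < a) (hb : 0 < b) (hc : 0 < c) (hd : 0 < d)
    (h : a - b = c - d) : f a / f b = f c / f d := by
  rw [div_eq_div_iff (hne b hb) (hne d hd), ← hadd a d ha hd, ← hadd c b hc hb,
    sub_eq_sub_iff_add_eq_add.1 h]

variable [IsOrderedAddMonoid α] (hadd : ∀ s t, 0 < s → 0 < t → f (s + t) = f s * f t)
  (hne : ∀ t, 0 < t → f t ≠ 0) {e : α} (he : 0 < e)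

/-- The additive character extending a nonvanishing multiplicative function `f` on the positive
cone, given by `f s / f t` at `s - t`. Shifting `x⁺` and `x⁻` by a fixed `e > 0` makes them
admissible as `s` and `t`. -/
def addCharOfPos : AddChar α M where
  toFun x := f (x⁺ + e) / f (x⁻ + e)
  map_zero_eq_one' := by
    rw [posPart_zero, negPart_zero]
    exact div_self (hne _ (by rwa [zero_add]))
  map_add_eq_mul' x y := by
    have hpos (z : α) : 0 < z⁺ + e := add_pos_of_nonneg_of_pos (posPart_nonneg z) he
    have hneg (z : α) : 0 < z⁻ + e := add_pos_of_nonneg_of_pos (negPart_nonneg z) he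
    rw [div_mul_div_comm, ← hadd _ _ (hpos x) (hpos y), ← hadd _ _ (hneg x) (hneg y)]
    refine div_eq_div_of_sub_eq_sub hadd hne (hpos _) (hneg _) (add_pos (hpos x) (hpos y))
      (add_pos (hneg x) (hneg y)) ?_
    rw [add_sub_add_right_eq_sub, posPart_sub_negPart, add_sub_add_comm, add_sub_add_right_eq_sub,
      add_sub_add_right_eq_sub, posPart_sub_negPart, posPart_sub_negPart]

lemma addCharOfPos_apply_of_pos {t : α} (ht : 0 < t) :
    addCharOfPos hadd hne he t = f t := by
  change f (t⁺ + e) / f (t⁻ + e) = f t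
  rw [posPart_of_nonneg ht.le, negPart_of_nonneg ht.le, zero_add, hadd t e ht he,
    mul_div_cancel_right₀ _ (hne e he)]

lemma measurable_addCharOfPos [MeasurableSpace α] [MeasurableAdd α] [MeasurableNeg α]
    [MeasurableSup α] [MeasurableSpace M] [MeasurableDiv₂ M]
    (hf : Measurable fun t : {t : α // 0 < t} ↦ f t) :
    Measurable (addCharOfPos hadd hne he) := by
  have hpos : Measurable fun x : α ↦ (⟨x⁺ + e, add_pos_of_nonneg_of_pos (posPart_nonneg x) he⟩ :
      {t : α // 0 < t}) :=
    (measurable_id.posPart.add_const e).subtype_mk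
  have hneg : Measurable fun x : α ↦ (⟨x⁻ + e, add_pos_of_nonneg_of_pos (negPart_nonneg x) he⟩ :
      {t : α // 0 < t}) :=
    (measurable_id.negPart.add_const e).subtype_mk
  exact (hf.comp hpos).div (hf.comp hneg)

end Extension

theorem stmt10_general {𝕜 : Type*} [NormedField 𝕜] [NormedAlgebra ℝ 𝕜] [CompleteSpace 𝕜]
    [SecondCountableTopology 𝕜] [MeasurableSpace 𝕜] [BorelSpace 𝕜] {f : ℝ → 𝕜}
    (hf : Measurable fun t : {t : ℝ // 0 < t} ↦ f t)
    (hadd : ∀ s t, 0 < s → 0 < t → f (s + t) = f s * f t) (hne : ∀ t, 0 < t → f t ≠ 0) :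
    ∃! c : 𝕜, ∀ t : ℝ, 0 < t → f t = exp (t • c) := by
  have hψ := measurable_addCharOfPos hadd hne one_pos hf
  obtain ⟨c, hc⟩ := exists_addChar_eq_exp_smul_of_locallyIntegrable
    (locallyIntegrable_addChar_of_measurable hψ)
  have hfc (t : ℝ) (ht : 0 < t) : f t = exp (t • c) :=
    (addCharOfPos_apply_of_pos hadd hne one_pos ht).symm.trans (hc t)
  refine ⟨c, hfc, fun d hd ↦ eq_of_exp_smul_eventuallyEq (𝕜 := ℝ) (t₀ := 1) ?_⟩
  filter_upwards [lt_mem_nhds one_pos] with t ht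
  rw [← hd t ht, hfc t ht]

/-- Let `E` be a product system and `u, v` units of `E`.  Then there
exists a unique complex number `c(u,v)` such that `⟨u(t), v(t)⟩ = e^{t·c(u,v)}` for all
`t > 0`.  A product system is modelled as a family of inner product spaces `E t`
(`t > 0`) with an associative multiplication `mult` satisfying
`⟨xa, yb⟩ = ⟨x,y⟩⟨a,b⟩`; a unit is a multiplicative measurable section, for which the
function `t ↦ ⟨u(t),v(t)⟩` is measurable and never zero. -/
theorem stmt10 (E : ℝ → Type*)
    [∀ t, NormedAddCommGroup (E t)] [∀ t, InnerProductSpace ℂ (E t)]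
    (mult : ∀ s t : ℝ, E s → E t → E (s + t))
    (hmult_assoc : ∀ (r s t : ℝ) (x : E r) (y : E s) (z : E t),
      HEq (mult (r + s) t (mult r s x y) z) (mult r (s + t) x (mult s t y z)))
    (hinner : ∀ (s t : ℝ), 0 < s → 0 < t → ∀ (x y : E s) (a b : E t),
      ⟪mult s t x a, mult s t y b⟫ = ⟪x, y⟫ * ⟪a, b⟫)
    (u v : ∀ t : ℝ, E t)
    (hu : ∀ s t : ℝ, 0 < s → 0 < t → u (s + t) = mult s t (u s) (u t))
    (hv : ∀ s t : ℝ, 0 < s → 0 < t → v (s + t) = mult s t (v s) (v t))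
    (hu0 : ∀ t : ℝ, 0 < t → u t ≠ 0)
    (hv0 : ∀ t : ℝ, 0 < t → v t ≠ 0)
    (hmeas : Measurable fun t : {t : ℝ // 0 < t} => ⟪u t.1, v t.1⟫)
    (hne : ∀ t : ℝ, 0 < t → ⟪u t, v t⟫ ≠ 0) :
    ∃! c : ℂ, ∀ t : ℝ, 0 < t → ⟪u t, v t⟫ = Complex.exp (t * c) := by
  simpa only [Complex.exp_eq_exp_ℂ, Complex.real_smul] using stmt10_general hmeas
    (fun s t hs ht ↦ by rw [hu s t hs ht, hv s t hs ht, hinner s t hs ht]) hne
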